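/- Consider the two-player game G with action sets A₁ = A₂ = {L, R} and utilities (u₁,u₂) given by (L,L) = (4,3), (L,R) = (1,4), (R,L) = (2,1), (R,R) = (3,2). With initial reference point a₀ = (L,R), k = 1, and the strictly alternating player function in which player 1 (Row) moves first, the (unconstrained) subgame perfect equilibrium outcome of Γ(a₀,k,I) is (R,R), which is Pareto dominated by (L,L). Hence without the no-harm principle constraint, the equilibrium outcome of Γ need not be Pareto optimal. -/

import Mathlib

namespace NoHarm

/-- A finite normal form game with `n` players: finite action sets `A i`,
nonempty, with decidable equality, and utility functions `u i : Profile → ℝ`. -/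
structure Game (n : ℕ) where
  A : Fin n → Type
  fintypeA : ∀ i, Fintype (A i)
  decA : ∀ i, DecidableEq (A i)
  neA : ∀ i, Nonempty (A i)
  u : Fin n → (∀ i, A i) → ℝ

attribute [instance] Game.fintypeA Game.decA Game.neA

/-- Action profiles of `G`. -/
abbrev Profile {n : ℕ} (G : Game n) : Type := ∀ i, G.A i

/-- A recorded move in the extensive form game `Γ`: the acting player together
with their choice (`none` = pass, `some a` = choose action `a`; choosing the
current component of the state is "staying", any other action is "moving"). -/
abbrev Move {n : ℕ} (G : Game n) : Type := Σ i : Fin n, Option (G.A i)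

/-- A node of `Γ`, identified with the history of moves leading to it
(the root is `[]`). -/
abbrev Hist {n : ℕ} (G : Game n) : Type := List (Move G)

variable {n : ℕ}

/-- One step of the left fold computing, along a history, the triple
(current state, current reference point, player who established the current
reference point by staying -- `none` for the initial reference point). -/
def stepFold (G : Game n) (x : Profile G × Profile G × Option (Fin n)) (m : Move G) :
    Profile G × Profile G × Option (Fin n) :=
  match m with
  | ⟨_, none⟩ => x
  | ⟨i, some a⟩ =>
    if a = x.1 i then (x.1, x.1, some i)
    else (Function.update x.1 i a, x.2.1, x.2.2)

/-- The (state, reference point, proposer) data at the node `h` of `Γ(a0,·,·)`. -/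
def fold3 (G : Game n) (a0 : Profile G) (h : Hist G) :
    Profile G × Profile G × Option (Fin n) :=
  h.foldl (stepFold G) (a0, a0, none)

/-- The state `S(x)` at a node. -/
def state (G : Game n) (a0 : Profile G) (h : Hist G) : Profile G := (fold3 G a0 h).1

/-- The reference point at a node (the most recent state at which a player
stayed, initially `a0`). -/
def refpt (G : Game n) (a0 : Profile G) (h : Hist G) : Profile G := (fold3 G a0 h).2.1

/-- The player who established the current reference point by staying
(`none` if it is still the initial reference point `a0`). -/
def proposer (G : Game n) (a0 : Profile G) (h : Hist G) : Option (Fin n) :=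
  (fold3 G a0 h).2.2

/-- `m` is a stay action at the node `h`: the mover chooses exactly the
component of the current state belonging to them. -/
def IsStay (G : Game n) (a0 : Profile G) (h : Hist G) (m : Move G) : Prop :=
  m.2 = some (state G a0 h m.1)

/-- Termination condition (i): one player stayed at a state `b`, making it
the reference point, and a different player subsequently also stays at `b`. -/
def TerminalStay (G : Game n) (a0 : Profile G) (h : Hist G) : Prop :=
  ∃ (h' : Hist G) (m : Move G) (i : Fin n),
    h = h' ++ [m] ∧ IsStay G a0 h' m ∧ refpt G a0 h' = state G a0 h' ∧
    proposer G a0 h' = some i ∧ i ≠ m.1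

/-- Termination condition (ii): all `n` players consecutively pass
(the last `n` moves are passes and every player is among their movers). -/
def TerminalPass (G : Game n) (h : Hist G) : Prop :=
  n ≤ h.length ∧ (∀ m ∈ h.drop (h.length - n), m.2 = none) ∧
    (∀ i : Fin n, ∃ m ∈ h.drop (h.length - n), m.1 = i)

/-- Terminal nodes of `Γ(a0,·,·)`. -/
def Terminal (G : Game n) (a0 : Profile G) (h : Hist G) : Prop :=
  TerminalStay G a0 h ∨ TerminalPass G h

/-- Number of predecessor nodes of `h` having the same state as `h` at which
the move `m` was made. -/
def countAct (G : Game n) (a0 : Profile G) (h : Hist G) (m : Move G) : ℕ :=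
  ((Finset.range h.length).filter
    (fun t => h[t]? = some m ∧ state G a0 (h.take t) = state G a0 h)).card

/-- Availability of the choice `c` for player `i` at node `h`: pass is always
available, and an action `a` is available iff `i` has chosen `a` at fewer than
`k` predecessor nodes carrying the same state as `h`. -/
def availAct (G : Game n) (a0 : Profile G) (k : ℕ) (h : Hist G) {i : Fin n}
    (c : Option (G.A i)) : Prop :=
  ∀ a : G.A i, c = some a → countAct G a0 h ⟨i, some a⟩ < k

/-- `h` is a (valid) node of the game tree of `Γ(a0,k,I)`: at each step the
recorded mover is the active player given by the player function `I`, the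
chosen action was available, and no proper predecessor is terminal. -/
structure IsNode (G : Game n) (a0 : Profile G) (k : ℕ) (I : Hist G → Fin n)
    (h : Hist G) : Prop where
  mover : ∀ (t : ℕ) (ht : t < h.length), (h.get ⟨t, ht⟩).1 = I (h.take t)
  avail : ∀ (t : ℕ) (ht : t < h.length), availAct G a0 k (h.take t) (h.get ⟨t, ht⟩).2
  nonterm : ∀ t < h.length, ¬ Terminal G a0 (h.take t)

/-- The player function is admissible: along every path of play the numbers of
nodes at which any two players have been active differ by at most one. -/
def Admissible (G : Game n) (a0 : Profile G) (k : ℕ) (I : Hist G → Fin n) : Prop :=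
  ∀ h, IsNode G a0 k I h → ∀ i j : Fin n,
    (h.map Sigma.fst).count i ≤ (h.map Sigma.fst).count j + 1

/-- A pure strategy of player `i`: a choice (pass or an action) at every node. -/
abbrev Strategy (G : Game n) (i : Fin n) : Type := Hist G → Option (G.A i)

/-- A pure strategy profile. -/
abbrev StratProfile (G : Game n) : Type := ∀ i, Strategy G i

/-- A strategy profile is valid if at every non-terminal node of the tree the
active player's prescribed choice is available. -/
def ValidProfile (G : Game n) (a0 : Profile G) (k : ℕ) (I : Hist G → Fin n)
    (σ : StratProfile G) : Prop :=
  ∀ h, IsNode G a0 k I h → ¬ Terminal G a0 h → availAct G a0 k h (σ (I h) h)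

open Classical in
/-- Play according to `σ` for (at most) the given number of steps from a node,
stopping at terminal nodes. -/
noncomputable def playN (G : Game n) (a0 : Profile G) (I : Hist G → Fin n)
    (σ : StratProfile G) : ℕ → Hist G → Hist G
  | 0, h => h
  | (t + 1), h =>
    if Terminal G a0 h then h
    else playN G a0 I σ t (h ++ [⟨I h, σ (I h) h⟩])

/-- A (generous) upper bound for the length of any play of `Γ(a0,k,I)`. -/
def bound (G : Game n) (k : ℕ) : ℕ :=
  ((k + 2) * (Fintype.card (Profile G) + 2) * ((∑ i, Fintype.card (G.A i)) + 2) + 2)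
    * (n + 2) * 4

/-- The outcome of `σ` in the subgame rooted at `h`: the reference point at the
terminal node reached by playing `σ` from `h`. -/
noncomputable def outcomeFrom (G : Game n) (a0 : Profile G) (k : ℕ)
    (I : Hist G → Fin n) (σ : StratProfile G) (h : Hist G) : Profile G :=
  refpt G a0 (playN G a0 I σ (bound G k + 1) h)

/-- The outcome of the strategy profile `σ` in `Γ(a0,k,I)`. -/
noncomputable def outcome (G : Game n) (a0 : Profile G) (k : ℕ)
    (I : Hist G → Fin n) (σ : StratProfile G) : Profile G :=
  outcomeFrom G a0 k I σ []

/-- `σ` satisfies the no-harm principle: every stay action it prescribes, at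
every (on- or off-path) non-terminal node of the tree, does not harm any other
player relative to the reference point at that node. -/
def SatNHP (G : Game n) (a0 : Profile G) (k : ℕ) (I : Hist G → Fin n)
    (σ : StratProfile G) : Prop :=
  ∀ h, IsNode G a0 k I h → ¬ Terminal G a0 h →
    σ (I h) h = some (state G a0 h (I h)) →
    ∀ j, j ≠ I h → G.u j (refpt G a0 h) ≤ G.u j (state G a0 h)

/-- No-harm equilibrium of `Γ(a0,k,I)`: a valid strategy profile satisfying the
NHP such that at every non-terminal node the active player's choice is a best
response among deviations keeping the profile valid and NHP-compliant. -/
def NHE (G : Game n) (a0 : Profile G) (k : ℕ) (I : Hist G → Fin n)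
    (σ : StratProfile G) : Prop :=
  ValidProfile G a0 k I σ ∧ SatNHP G a0 k I σ ∧
  ∀ h, IsNode G a0 k I h → ¬ Terminal G a0 h →
    ∀ τ : Strategy G (I h),
      ValidProfile G a0 k I (Function.update σ (I h) τ) →
      SatNHP G a0 k I (Function.update σ (I h) τ) →
      G.u (I h) (outcomeFrom G a0 k I (Function.update σ (I h) τ) h) ≤
        G.u (I h) (outcomeFrom G a0 k I σ h)

/-- Subgame perfect equilibrium of `Γ(a0,k,I)` (no NHP constraint). -/
def SPE (G : Game n) (a0 : Profile G) (k : ℕ) (I : Hist G → Fin n)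
    (σ : StratProfile G) : Prop :=
  ValidProfile G a0 k I σ ∧
  ∀ h, IsNode G a0 k I h → ¬ Terminal G a0 h →
    ∀ τ : Strategy G (I h),
      ValidProfile G a0 k I (Function.update σ (I h) τ) →
      G.u (I h) (outcomeFrom G a0 k I (Function.update σ (I h) τ) h) ≤
        G.u (I h) (outcomeFrom G a0 k I σ h)

/-- `b` Pareto dominates `a`. -/
def ParetoDom (G : Game n) (b a : Profile G) : Prop :=
  (∀ i, G.u i a ≤ G.u i b) ∧ ∃ i, G.u i a < G.u i b

/-- `a` is Pareto optimal. -/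
def ParetoOpt (G : Game n) (a : Profile G) : Prop := ∀ b, ¬ ParetoDom G b a

/-- `b` strictly Pareto dominates `a`. -/
def StrictDom (G : Game n) (b a : Profile G) : Prop := ∀ i, G.u i a < G.u i b

/-- `a` is weakly Pareto optimal. -/
def WeakParetoOpt (G : Game n) (a : Profile G) : Prop := ∀ b, ¬ StrictDom G b a

/-- Preferences are strict: each utility function is injective on profiles. -/
def StrictPrefs (G : Game n) : Prop := ∀ i, Function.Injective (G.u i)


/-- The game of Section 4.1.1: actions `0 = L`, `1 = R`, payoffs
`(L,L)=(4,3), (L,R)=(1,4), (R,L)=(2,1), (R,R)=(3,2)`. -/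
def g13 : Game 2 where
  A _ := Fin 2
  fintypeA _ := inferInstance
  decA _ := inferInstance
  neA _ := inferInstance
  u i s :=
    if s 0 = 0 then
      (if s 1 = 0 then (if i = 0 then 4 else 3) else (if i = 0 then 1 else 4))
    else
      (if s 1 = 0 then (if i = 0 then 2 else 1) else (if i = 0 then 3 else 2))

/-- The strictly alternating player function with player `0` (Row) first. -/
def altI13 : Hist g13 → Fin 2 := fun h => ⟨h.length % 2, by omega⟩

/-- (L,R), the initial reference point. -/
def lr13 : Profile g13 := fun i => if i = 0 then (0 : Fin 2) else (1 : Fin 2)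

/-- (R,R). -/
def rr13 : Profile g13 := fun _ => (1 : Fin 2)

/-- (L,L). -/
def ll13 : Profile g13 := fun _ => (0 : Fin 2)

/-!
By the one-shot deviation principle a player can secure at any node what they get by passing
forever, which freezes their component of the state. Suppose Row opens with `R`. Column, by
passing, and Row, by staying at `R` once and then passing, each secure payoff `2`, which leaves
`(R,R)` and `(L,L)` as possible outcomes. Row would have to return to `L` to reach `(L,L)`, but
Row's only permitted departure from `(L,R)` is used up, so Column could then go to `(L,R)`, stay
there and pass until Row has to accept it. Hence the outcome is `(R,R)`. If Row instead passes or
stays at the root, Column ends the game at once with its favourite outcome `(L,R)`, Row's worst.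
-/

section Histories

variable {G : Game n} {a0 : Profile G} {k : ℕ} {I : Hist G → Fin n}

theorem state_append_pass (h : Hist G) (i : Fin n) :
    state G a0 (h ++ [⟨i, none⟩]) = state G a0 h := by
  simp only [state, fold3, List.foldl_concat, stepFold]

theorem refpt_append_pass (h : Hist G) (i : Fin n) :
    refpt G a0 (h ++ [⟨i, none⟩]) = refpt G a0 h := by
  simp only [refpt, fold3, List.foldl_concat, stepFold]

theorem state_append_some (h : Hist G) (i : Fin n) (a : G.A i) :
    state G a0 (h ++ [⟨i, some a⟩]) = Function.update (state G a0 h) i a := by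
  simp only [state, fold3, List.foldl_concat, stepFold]
  split_ifs with ha
  · rw [ha, Function.update_eq_self]
  · rfl

theorem refpt_append_some (h : Hist G) (i : Fin n) (a : G.A i) :
    refpt G a0 (h ++ [⟨i, some a⟩]) =
      if a = state G a0 h i then state G a0 h else refpt G a0 h := by
  simp only [refpt, state, fold3, List.foldl_concat, stepFold]
  split_ifs with ha <;> simp only [ha, if_true, if_false]

theorem state_append_stay (h : Hist G) (i : Fin n) :
    state G a0 (h ++ [⟨i, some (state G a0 h i)⟩]) = state G a0 h := by
  rw [state_append_some, Function.update_eq_self]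

theorem refpt_append_stay (h : Hist G) (i : Fin n) :
    refpt G a0 (h ++ [⟨i, some (state G a0 h i)⟩]) = state G a0 h := by
  rw [refpt_append_some, if_pos rfl]

theorem state_append_of_ne (h : Hist G) {m : Move G} {j : Fin n} (hj : j ≠ m.1) :
    state G a0 (h ++ [m]) j = state G a0 h j := by
  obtain ⟨i, _ | a⟩ := m
  · rw [state_append_pass]
  · rw [state_append_some, Function.update_of_ne hj]

theorem refpt_append_eq_or (h : Hist G) (m : Move G) :
    refpt G a0 (h ++ [m]) = refpt G a0 h ∨ refpt G a0 (h ++ [m]) = state G a0 h := by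
  obtain ⟨i, _ | a⟩ := m
  · exact .inl (refpt_append_pass h i)
  · rw [refpt_append_some]
    exact (ite_eq_or_eq _ _ _).symm

theorem TerminalPass.eq_none_of_mem {h l : Hist G} (hT : TerminalPass G (h ++ l))
    (hl : l.length ≤ n) {m : Move G} (hm : m ∈ l) : m.2 = none := by
  refine hT.2.1 m ?_
  rw [List.drop_append_of_le_length (by rw [List.length_append]; omega)]
  exact List.mem_append_right _ hm

theorem TerminalStay.isStay_and_refpt_eq {h : Hist G} {m : Move G}
    (hT : TerminalStay G a0 (h ++ [m])) : IsStay G a0 h m ∧ refpt G a0 h = state G a0 h := by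
  obtain ⟨h', m', _, he, hs, hr, -⟩ := hT
  obtain ⟨rfl, hm⟩ := List.append_inj' he rfl
  rw [List.singleton_inj.1 hm]
  exact ⟨hs, hr⟩

theorem terminal_append_some_iff {h : Hist G} {i : Fin n} {a : G.A i} :
    Terminal G a0 (h ++ [⟨i, some a⟩]) ↔ TerminalStay G a0 (h ++ [⟨i, some a⟩]) :=
  or_iff_left fun hT => Option.some_ne_none a (hT.eq_none_of_mem i.pos List.mem_cons_self)

theorem not_terminal_append_move {h : Hist G} {i : Fin n} {a : G.A i}
    (ha : a ≠ state G a0 h i) : ¬ Terminal G a0 (h ++ [⟨i, some a⟩]) := fun hT =>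
  ha (Option.some.inj (terminal_append_some_iff.1 hT).isStay_and_refpt_eq.1)

theorem not_terminal_append_some {h : Hist G} (hr : refpt G a0 h ≠ state G a0 h) (i : Fin n)
    (a : G.A i) : ¬ Terminal G a0 (h ++ [⟨i, some a⟩]) := fun hT =>
  hr (terminal_append_some_iff.1 hT).isStay_and_refpt_eq.2

theorem not_terminal_of_length_le_one (hn : 2 ≤ n) {h : Hist G} (hh : h.length ≤ 1) :
    ¬ Terminal G a0 h := by
  rintro (⟨h', m, i, rfl, -, -, hi, -⟩ | hT)
  · obtain rfl : h' = [] := by simpa using hh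
    exact Option.some_ne_none i hi.symm
  · exact absurd (hn.trans (hT.1.trans hh)) (by decide)

theorem not_terminal_append_some_pass (hn : 2 ≤ n) (h : Hist G) (i j : Fin n) (a : G.A i) :
    ¬ Terminal G a0 (h ++ [⟨i, some a⟩] ++ [⟨j, none⟩]) := by
  rintro (hT | hT)
  · exact Option.some_ne_none _ hT.isStay_and_refpt_eq.1.symm
  · rw [List.append_assoc] at hT
    exact Option.some_ne_none a (hT.eq_none_of_mem hn List.mem_cons_self)

theorem isNode_iff_forall_prefix {h : Hist G} :
    IsNode G a0 k I h ↔ ∀ h' m, h' ++ [m] <+: h →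
      m.1 = I h' ∧ availAct G a0 k h' m.2 ∧ ¬ Terminal G a0 h' := by
  constructor
  · rintro H h' m ⟨l, rfl⟩
    have ht : h'.length < (h' ++ [m] ++ l).length := by simp
    have hmover := H.mover _ ht
    have havail := H.avail _ ht
    have hnonterm := H.nonterm _ ht
    have htake : (h' ++ [m] ++ l).take h'.length = h' := by simp
    have hget : (h' ++ [m] ++ l).get ⟨h'.length, ht⟩ = m := by simp
    rw [htake, hget] at havail
    rw [htake, hget] at hmover
    exact ⟨hmover, havail, htake ▸ hnonterm⟩
  · intro H
    have key (t : ℕ) (ht : t < h.length) := H (h.take t) (h.get ⟨t, ht⟩)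
      (by rw [List.get_eq_getElem, List.take_append_getElem]; exact List.take_prefix _ _)
    exact ⟨fun t ht => (key t ht).1, fun t ht => (key t ht).2.1, fun t ht => (key t ht).2.2⟩

theorem isNode_nil : IsNode G a0 k I [] :=
  isNode_iff_forall_prefix.2 fun _ _ hp => by simp at hp

theorem isNode_append_singleton {h : Hist G} {m : Move G} :
    IsNode G a0 k I (h ++ [m]) ↔
      IsNode G a0 k I h ∧ m.1 = I h ∧ availAct G a0 k h m.2 ∧ ¬ Terminal G a0 h := by
  simp only [isNode_iff_forall_prefix, List.prefix_concat_iff]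
  constructor
  · exact fun H => ⟨fun h' m' hp => H h' m' (.inr hp), H h m (.inl rfl)⟩
  · rintro ⟨H, hm⟩ h' m' (he | hp)
    · obtain ⟨rfl, hm'⟩ := List.append_inj' he rfl
      rwa [List.singleton_inj.1 hm']
    · exact H h' m' hp

theorem IsNode.of_prefix {h h' : Hist G} (hn : IsNode G a0 k I h) (hp : h' <+: h) :
    IsNode G a0 k I h' :=
  isNode_iff_forall_prefix.2 fun _ _ hp' => isNode_iff_forall_prefix.1 hn _ _ (hp'.trans hp)

theorem IsNode.append_choice {h : Hist G} (hn : IsNode G a0 k I h) (hT : ¬ Terminal G a0 h)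
    {i : Fin n} (hi : I h = i) {c : Option (G.A i)} (hc : availAct G a0 k h c) :
    IsNode G a0 k I (h ++ [⟨i, c⟩]) :=
  isNode_append_singleton.2 ⟨hn, hi.symm, hc, hT⟩

/-- The number of times the move `m` was made along `h` in the state `s`. The count `countAct`
governing availability is the case in which `s` is the current state; fixing `s` instead makes the
count monotone along a play. -/
def timesPlayed (G : Game n) (a0 : Profile G) (h : Hist G) (s : Profile G) (m : Move G) : ℕ :=
  ((Finset.range h.length).filter
    (fun t => h[t]? = some m ∧ state G a0 (h.take t) = s)).card

theorem timesPlayed_append_singleton (h : Hist G) (m' : Move G) (s : Profile G) (m : Move G) :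
    timesPlayed G a0 (h ++ [m']) s m =
      timesPlayed G a0 h s m + if m' = m ∧ state G a0 h = s then 1 else 0 := by
  have hcongr : (Finset.range h.length).filter (fun t => (h ++ [m'])[t]? = some m ∧
      state G a0 ((h ++ [m']).take t) = s) =
      (Finset.range h.length).filter (fun t => h[t]? = some m ∧ state G a0 (h.take t) = s) := by
    refine Finset.filter_congr fun t ht => ?_
    rw [Finset.mem_range] at ht
    rw [List.getElem?_append_left ht, List.take_append_of_le_length ht.le]
  rw [timesPlayed, timesPlayed, List.length_append, List.length_singleton,
    Finset.range_add_one, Finset.filter_insert, hcongr]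
  simp only [List.getElem?_concat_length, Option.some.injEq, List.take_left]
  split_ifs
  · rw [Finset.card_insert_of_notMem (by simp)]
  · rfl

theorem availAct_pass (h : Hist G) (i : Fin n) : availAct G a0 k h (i := i) none :=
  fun _ ha => nomatch ha

theorem availAct_some {h : Hist G} {i : Fin n} {a : G.A i} :
    availAct G a0 k h (some a) ↔ timesPlayed G a0 h (state G a0 h) ⟨i, some a⟩ < k :=
  ⟨fun H => H a rfl, fun H _ hb => Option.some.inj hb ▸ H⟩

end Histories

section Length

variable {G : Game n} {a0 : Profile G} {k : ℕ} {I : Hist G → Fin n}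

theorem IsNode.timesPlayed_le {h : Hist G} (hn : IsNode G a0 k I h) (s : Profile G) {i : Fin n}
    (a : G.A i) : timesPlayed G a0 h s ⟨i, some a⟩ ≤ k := by
  induction h using List.reverseRecOn with
  | nil => exact Nat.zero_le k
  | append_singleton h m ih =>
    obtain ⟨hn, -, hc, -⟩ := isNode_append_singleton.1 hn
    rw [timesPlayed_append_singleton]
    split_ifs with hm
    · obtain ⟨rfl, rfl⟩ := hm
      exact availAct_some.1 hc
    · exact ih hn

theorem countP_isSome_eq_sum_timesPlayed (h : Hist G) :
    h.countP (fun m => m.2.isSome) =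
      ∑ p : Profile G × (Σ i, G.A i), timesPlayed G a0 h p.1 ⟨p.2.1, some p.2.2⟩ := by
  induction h using List.reverseRecOn with
  | nil => exact (Finset.sum_eq_zero fun _ _ => rfl).symm
  | append_singleton h m ih =>
    simp only [timesPlayed_append_singleton, Finset.sum_add_distrib, List.countP_append,
      List.countP_singleton, ih]
    congr 1
    obtain ⟨i, _ | a⟩ := m
    · have hpass (p : Profile G × (Σ i, G.A i)) :
          (⟨i, none⟩ : Move G) ≠ ⟨p.2.1, some p.2.2⟩ := nofun
      simp [hpass]
    · have hsingle (p : Profile G × (Σ i, G.A i)) :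
          ((⟨i, some a⟩ : Move G) = ⟨p.2.1, some p.2.2⟩ ∧ state G a0 h = p.1) ↔
            (state G a0 h, ⟨i, a⟩) = p := by
        obtain ⟨s, j, b⟩ := p
        constructor
        · rintro ⟨hm, rfl⟩
          cases hm
          rfl
        · rintro ⟨⟩
          exact ⟨rfl, rfl⟩
      simp only [hsingle, Finset.sum_ite_eq, Finset.mem_univ, if_true, Option.isSome_some]

theorem IsNode.countP_isSome_le {h : Hist G} (hn : IsNode G a0 k I h) :
    h.countP (fun m => m.2.isSome) ≤ k * (Fintype.card (Profile G) * ∑ i, Fintype.card (G.A i)) :=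
  calc h.countP (fun m => m.2.isSome)
      = ∑ p : Profile G × (Σ i, G.A i), timesPlayed G a0 h p.1 ⟨p.2.1, some p.2.2⟩ :=
        countP_isSome_eq_sum_timesPlayed h
    _ ≤ ∑ _p : Profile G × (Σ i, G.A i), k :=
        Finset.sum_le_sum fun p _ => hn.timesPlayed_le p.1 p.2.2
    _ = k * (Fintype.card (Profile G) * ∑ i, Fintype.card (G.A i)) := by
        rw [Finset.sum_const, Finset.card_univ, Fintype.card_prod, Fintype.card_sigma,
          smul_eq_mul, mul_comm]

theorem Admissible.count_eq_of_length_eq (hI : Admissible G a0 k I) {h : Hist G}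
    (hn : IsNode G a0 k I h) {q : ℕ} (hq : h.length = n * q) (i : Fin n) :
    (h.map Sigma.fst).count i = q := by
  have hsum : ∑ j, (h.map Sigma.fst).count j = ∑ _j : Fin n, q := by
    have hcard := Multiset.sum_count_eq_card (s := Finset.univ)
      (m := (Multiset.ofList (h.map Sigma.fst))) fun j _ => Finset.mem_univ j
    simpa [hq] using hcard
  rcases lt_trichotomy ((h.map Sigma.fst).count i) q with hlt | heq | hgt
  · refine absurd hsum (Finset.sum_lt_sum (fun j _ => ?_) ⟨i, Finset.mem_univ i, hlt⟩).ne
    exact (hI h hn j i).trans hlt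
  · exact heq
  · refine absurd hsum (Finset.sum_lt_sum (fun j _ => ?_) ⟨i, Finset.mem_univ i, hgt⟩).ne'
    have := hI h hn i j
    omega

/-- Every player is active exactly once in each round of `n` moves, so a round of passes would be
terminal. -/
theorem Admissible.le_countP_isSome (hI : Admissible G a0 k I) (q : ℕ) :
    ∀ {h : Hist G}, IsNode G a0 k I h → ¬ Terminal G a0 h → h.length = n * q →
      q ≤ h.countP (fun m => m.2.isSome) := by
  induction q with
  | zero => exact fun _ _ _ => Nat.zero_le _
  | succ q ih =>
    intro h hn hT hq
    have hpos : 0 < n := (I []).pos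
    have hlen : h.length - n = n * q := by rw [hq, Nat.mul_succ, Nat.add_sub_cancel]
    have hlt : n * q < h.length := by rw [hq]; gcongr; exact Nat.lt_succ_self q
    have htake : (h.take (n * q)).length = n * q := List.length_take_of_le hlt.le
    have hnode : IsNode G a0 k I (h.take (n * q)) := hn.of_prefix (List.take_prefix _ _)
    have hearlier : q ≤ (h.take (n * q)).countP (fun m => m.2.isSome) :=
      ih hnode (hn.nonterm _ hlt) htake
    have hround (i : Fin n) : ∃ m ∈ h.drop (n * q), m.1 = i := by
      have hcount := hI.count_eq_of_length_eq hn hq i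
      rw [← List.take_append_drop (n * q) h, List.map_append, List.count_append,
        hI.count_eq_of_length_eq hnode htake i] at hcount
      exact List.mem_map.1 (List.count_pos_iff.1 (by omega))
    have hactive : 0 < (h.drop (n * q)).countP (fun m => m.2.isSome) := by
      rw [List.countP_pos_iff]
      by_contra! hpass
      refine hT (.inr ⟨hq ▸ Nat.le_mul_of_pos_right n q.succ_pos, ?_, ?_⟩) <;> rw [hlen]
      · simpa using hpass
      · exact hround
    rw [← List.take_append_drop (n * q) h, List.countP_append]
    omega

theorem Admissible.length_le_bound (hI : Admissible G a0 k I) {h : Hist G}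
    (hn : IsNode G a0 k I h) : h.length ≤ bound G k := by
  set P := Fintype.card (Profile G)
  set A := ∑ i, Fintype.card (G.A i)
  have hrounds : h.length ≤ n * (k * (P * A) + 1) := by
    by_contra! hlt
    have hnode : IsNode G a0 k I (h.take (n * (k * (P * A) + 1))) :=
      hn.of_prefix (List.take_prefix _ _)
    have hle := hI.le_countP_isSome _ hnode (hn.nonterm _ hlt) (List.length_take_of_le hlt.le)
    exact absurd (hle.trans hnode.countP_isSome_le) (Nat.not_succ_le_self _)
  calc h.length ≤ n * (k * (P * A) + 1) := hrounds
    _ = (k * P * A + 1) * n * 1 := by ring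
    _ ≤ ((k + 2) * (P + 2) * (A + 2) + 2) * (n + 2) * 4 := by gcongr <;> omega

theorem Admissible.backward_induction (hI : Admissible G a0 k I)
    {p : ∀ h, IsNode G a0 k I h → Prop}
    (step : ∀ h hn, (∀ m (hm : IsNode G a0 k I (h ++ [m])), p (h ++ [m]) hm) → p h hn)
    (h : Hist G) (hn : IsNode G a0 k I h) : p h hn := by
  induction hd : bound G k - h.length using Nat.strong_induction_on generalizing h with
  | _ d ih =>
    refine step h hn fun m hm => ih _ ?_ _ hm rfl
    have hlen := hI.length_le_bound hm
    rw [List.length_append, List.length_singleton] at hlen ⊢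
    omega

end Length

section Equilibrium

variable {G : Game n} {a0 : Profile G} {k : ℕ} {I : Hist G → Fin n} {σ σ' : StratProfile G}

theorem ValidProfile.isNode_append (hσ : ValidProfile G a0 k I σ) {h : Hist G}
    (hn : IsNode G a0 k I h) (hT : ¬ Terminal G a0 h) :
    IsNode G a0 k I (h ++ [⟨I h, σ (I h) h⟩]) :=
  hn.append_choice hT rfl (hσ h hn hT)

theorem playN_succ_of_terminal (σ : StratProfile G) (t : ℕ) {h : Hist G}
    (hT : Terminal G a0 h) : playN G a0 I σ (t + 1) h = h :=
  if_pos hT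

theorem playN_succ_of_not_terminal (σ : StratProfile G) (t : ℕ) {h : Hist G}
    (hT : ¬ Terminal G a0 h) :
    playN G a0 I σ (t + 1) h = playN G a0 I σ t (h ++ [⟨I h, σ (I h) h⟩]) :=
  if_neg hT

theorem playN_succ_eq (hI : Admissible G a0 k I) (hσ : ValidProfile G a0 k I σ) (t : ℕ) :
    ∀ {h : Hist G}, IsNode G a0 k I h → bound G k < h.length + t →
      playN G a0 I σ (t + 1) h = playN G a0 I σ t h := by
  induction t with
  | zero => exact fun hn hlt => absurd (hI.length_le_bound hn) hlt.not_ge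
  | succ t ih =>
    intro h hn hlt
    by_cases hT : Terminal G a0 h
    · rw [playN_succ_of_terminal σ _ hT, playN_succ_of_terminal σ _ hT]
    · rw [playN_succ_of_not_terminal σ _ hT, playN_succ_of_not_terminal σ _ hT]
      refine ih (hσ.isNode_append hn hT) ?_
      rw [List.length_append, List.length_singleton]
      omega

theorem outcomeFrom_of_terminal {h : Hist G} (hT : Terminal G a0 h) :
    outcomeFrom G a0 k I σ h = refpt G a0 h := by
  rw [outcomeFrom, playN_succ_of_terminal σ _ hT]

theorem ValidProfile.outcomeFrom_append (hσ : ValidProfile G a0 k I σ) (hI : Admissible G a0 k I)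
    {h : Hist G} (hn : IsNode G a0 k I h) (hT : ¬ Terminal G a0 h) :
    outcomeFrom G a0 k I σ (h ++ [⟨I h, σ (I h) h⟩]) = outcomeFrom G a0 k I σ h := by
  have hlt : bound G k < (h ++ [(⟨I h, σ (I h) h⟩ : Move G)]).length + bound G k := by
    rw [List.length_append, List.length_singleton]
    omega
  rw [outcomeFrom, outcomeFrom, playN_succ_eq hI hσ _ (hσ.isNode_append hn hT) hlt,
    playN_succ_of_not_terminal σ _ hT]

theorem ValidProfile.exists_outcomeFrom_append (hσ : ValidProfile G a0 k I σ)
    (hI : Admissible G a0 k I) {h : Hist G} (hn : IsNode G a0 k I h) (hT : ¬ Terminal G a0 h)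
    {i : Fin n} (hi : I h = i) :
    ∃ c : Option (G.A i), availAct G a0 k h c ∧
      outcomeFrom G a0 k I σ (h ++ [⟨i, c⟩]) = outcomeFrom G a0 k I σ h := by
  subst hi
  exact ⟨σ (I h) h, hσ h hn hT, hσ.outcomeFrom_append hI hn hT⟩

theorem outcomeFrom_congr {h : Hist G} (hσ : ∀ j h', h <+: h' → σ j h' = σ' j h') :
    outcomeFrom G a0 k I σ h = outcomeFrom G a0 k I σ' h := by
  have hplay : ∀ t, playN G a0 I σ t h = playN G a0 I σ' t h := by
    intro t
    induction t generalizing h with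
    | zero => rfl
    | succ t ih =>
      by_cases hT : Terminal G a0 h
      · rw [playN_succ_of_terminal σ _ hT, playN_succ_of_terminal σ' _ hT]
      · rw [playN_succ_of_not_terminal σ _ hT, playN_succ_of_not_terminal σ' _ hT,
          hσ _ h List.prefix_rfl]
        exact ih fun j h' hp => hσ j h' ((List.prefix_append _ _).trans hp)
  rw [outcomeFrom, outcomeFrom, hplay]

/-- The one-shot deviation property at the node `h`: the active player does not gain by changing
their choice at `h` alone. -/
def OneShotOptimal (G : Game n) (a0 : Profile G) (k : ℕ) (I : Hist G → Fin n)
    (σ : StratProfile G) (h : Hist G) : Prop :=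
  ∀ c : Option (G.A (I h)), availAct G a0 k h c →
    G.u (I h) (outcomeFrom G a0 k I σ (h ++ [⟨I h, c⟩])) ≤ G.u (I h) (outcomeFrom G a0 k I σ h)

theorem SPE.oneShotOptimal (hσ : SPE G a0 k I σ) (hI : Admissible G a0 k I) {h : Hist G}
    (hn : IsNode G a0 k I h) (hT : ¬ Terminal G a0 h) : OneShotOptimal G a0 k I σ h := by
  intro c hc
  set τ : Strategy G (I h) := Function.update (σ (I h)) h c
  have hτ_self : Function.update σ (I h) τ (I h) h = c := by
    simp only [τ, Function.update_self]
  have hτ_of_ne (j : Fin n) (h' : Hist G) (hne : h' ≠ h) :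
      Function.update σ (I h) τ j h' = σ j h' := by
    by_cases hj : j = I h
    · subst hj
      simp only [τ, Function.update_self, Function.update_of_ne hne]
    · rw [Function.update_of_ne hj]
  have hvalid : ValidProfile G a0 k I (Function.update σ (I h) τ) := by
    intro h' hn' hT'
    by_cases hh : h' = h
    · subst hh
      rwa [hτ_self]
    · rw [hτ_of_ne _ h' hh]
      exact hσ.1 h' hn' hT'
  have hplay : outcomeFrom G a0 k I σ (h ++ [⟨I h, c⟩]) =
      outcomeFrom G a0 k I (Function.update σ (I h) τ) h := by
    rw [← hvalid.outcomeFrom_append hI hn hT, hτ_self]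
    refine outcomeFrom_congr fun j h' hp => (hτ_of_ne j h' ?_).symm
    rintro rfl
    simpa using hp.length_le
  rw [hplay]
  exact hσ.2 h hn hT τ hvalid

theorem ValidProfile.spe_of_oneShotOptimal (hσ : ValidProfile G a0 k I σ)
    (hI : Admissible G a0 k I)
    (hopt : ∀ h, IsNode G a0 k I h → ¬ Terminal G a0 h → OneShotOptimal G a0 k I σ h) :
    SPE G a0 k I σ := by
  have hdev (i : Fin n) (τ : Strategy G i)
      (hτ : ValidProfile G a0 k I (Function.update σ i τ)) {h : Hist G}
      (hn : IsNode G a0 k I h) :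
      G.u i (outcomeFrom G a0 k I (Function.update σ i τ) h) ≤
        G.u i (outcomeFrom G a0 k I σ h) := by
    induction h, hn using hI.backward_induction with
    | step h hn ih =>
    by_cases hT : Terminal G a0 h
    · rw [outcomeFrom_of_terminal hT, outcomeFrom_of_terminal hT]
    · rw [← hτ.outcomeFrom_append hI hn hT]
      refine (ih _ (hτ.isNode_append hn hT)).trans ?_
      by_cases hi : I h = i
      · subst hi
        exact hopt h hn hT _ (hτ h hn hT)
      · rw [Function.update_of_ne hi, hσ.outcomeFrom_append hI hn hT]
  exact ⟨hσ, fun h hn _ τ hτ => hdev (I h) τ hτ hn⟩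

theorem exists_best_choice (σ : StratProfile G) (j : Fin n) (h : Hist G) :
    ∃ b : Option (G.A j), availAct G a0 k h b ∧ ∀ c : Option (G.A j), availAct G a0 k h c →
      G.u j (outcomeFrom G a0 k I σ (h ++ [⟨j, c⟩])) ≤
        G.u j (outcomeFrom G a0 k I σ (h ++ [⟨j, b⟩])) :=
  Set.exists_max_image {c : Option (G.A j) | availAct G a0 k h c}
    (fun c => G.u j (outcomeFrom G a0 k I σ (h ++ [(⟨j, c⟩ : Move G)])))
    (Set.toFinite _) ⟨none, availAct_pass h j⟩

/-- Backward induction: the profile already built for histories longer than `L` is kept there, and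
elsewhere replaced by best choices against it. -/
theorem Admissible.exists_oneShotOptimal_of_lt_length (hI : Admissible G a0 k I) (d : ℕ) :
    ∃ σ : StratProfile G, ValidProfile G a0 k I σ ∧ ∀ h, IsNode G a0 k I h → ¬ Terminal G a0 h →
      bound G k < h.length + d → OneShotOptimal G a0 k I σ h := by
  induction d with
  | zero =>
    exact ⟨fun _ _ => none, fun h _ _ => availAct_pass h (I h),
      fun h hn _ hlt => absurd (hI.length_le_bound hn) hlt.not_ge⟩
  | succ d ih =>
    obtain ⟨σ, hσ, hopt⟩ := ih
    choose best hbest hmax using exists_best_choice (a0 := a0) (k := k) (I := I) σ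
    set σ' : StratProfile G := fun j h => if bound G k < h.length + d then σ j h else best j h
    have hσ' : ValidProfile G a0 k I σ' := by
      intro h hn hT
      simp only [σ']
      split_ifs
      · exact hσ h hn hT
      · exact hbest (I h) h
    have hlate {h : Hist G} (hlt : bound G k < h.length + d) :
        outcomeFrom G a0 k I σ' h = outcomeFrom G a0 k I σ h :=
      outcomeFrom_congr fun j h' hp => if_pos (hlt.trans_le (by gcongr; exact hp.length_le))
    refine ⟨σ', hσ', fun h hn hT hlt c hc => ?_⟩
    rw [hlate (by rw [List.length_append, List.length_singleton]; omega)]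
    by_cases hlt' : bound G k < h.length + d
    · rw [hlate hlt']
      exact hopt h hn hT hlt' c hc
    · have hchoice : σ' (I h) h = best (I h) h := if_neg hlt'
      rw [← hσ'.outcomeFrom_append hI hn hT, hchoice,
        hlate (by rw [List.length_append, List.length_singleton]; omega)]
      exact hmax (I h) h c hc

theorem Admissible.exists_spe (hI : Admissible G a0 k I) :
    ∃ σ : StratProfile G, SPE G a0 k I σ := by
  obtain ⟨σ, hσ, hopt⟩ := hI.exists_oneShotOptimal_of_lt_length (bound G k + 1)
  exact ⟨σ, hσ.spe_of_oneShotOptimal hI fun h hn hT => hopt h hn hT (by omega)⟩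

theorem SPE.utility_outcomeFrom_append_le (hσ : SPE G a0 k I σ) (hI : Admissible G a0 k I)
    {h : Hist G} (hn : IsNode G a0 k I h) (hT : ¬ Terminal G a0 h) {i : Fin n} (hi : I h = i)
    {c : Option (G.A i)} (hc : availAct G a0 k h c) :
    G.u i (outcomeFrom G a0 k I σ (h ++ [⟨i, c⟩])) ≤ G.u i (outcomeFrom G a0 k I σ h) := by
  subst hi
  exact hσ.oneShotOptimal hI hn hT c hc

/-- A player who passes forever keeps their component of the state fixed. -/
theorem SPE.le_utility_of_forall_eq_state (hσ : SPE G a0 k I σ) (hI : Admissible G a0 k I)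
    {i : Fin n} {r : ℝ} {h : Hist G} (hn : IsNode G a0 k I h)
    (hstate : ∀ s : Profile G, s i = state G a0 h i → r ≤ G.u i s)
    (href : r ≤ G.u i (refpt G a0 h)) : r ≤ G.u i (outcomeFrom G a0 k I σ h) := by
  induction h, hn using hI.backward_induction with
  | step h hn ih =>
  by_cases hT : Terminal G a0 h
  · rwa [outcomeFrom_of_terminal hT]
  by_cases hi : I h = i
  · have hpass : r ≤ G.u i (outcomeFrom G a0 k I σ (h ++ [⟨i, none⟩])) :=
      ih _ (hn.append_choice hT hi (availAct_pass h i))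
        (by rwa [state_append_pass]) (by rwa [refpt_append_pass])
    exact hpass.trans (hσ.utility_outcomeFrom_append_le hI hn hT hi (availAct_pass h i))
  obtain ⟨c, hc, hout⟩ := hσ.1.exists_outcomeFrom_append hI hn hT rfl
  rw [← hout]
  refine ih _ (hn.append_choice hT rfl hc) ?_ ?_
  · rwa [state_append_of_ne h (Ne.symm hi)]
  · obtain hr | hr := refpt_append_eq_or h ⟨I h, c⟩ <;> rw [hr]
    · exact href
    · exact hstate _ rfl

theorem SPE.le_utility_of_availAct_stay (hσ : SPE G a0 k I σ) (hI : Admissible G a0 k I)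
    {i : Fin n} {r : ℝ} {h : Hist G} (hn : IsNode G a0 k I h) (hT : ¬ Terminal G a0 h)
    (hi : I h = i) (hc : availAct G a0 k h (some (state G a0 h i)))
    (hstate : ∀ s : Profile G, s i = state G a0 h i → r ≤ G.u i s) :
    r ≤ G.u i (outcomeFrom G a0 k I σ h) := by
  refine le_trans ?_ (hσ.utility_outcomeFrom_append_le hI hn hT hi hc)
  refine hσ.le_utility_of_forall_eq_state hI (hn.append_choice hT hi hc) ?_ ?_
  · rwa [state_append_stay]
  · rw [refpt_append_stay]
    exact hstate _ rfl

end Equilibrium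

section Example

/-- The action `L` of player `i` in `g13`. -/
def left13 (i : Fin 2) : g13.A i := (0 : Fin 2)

/-- The action `R` of player `i` in `g13`. -/
def right13 (i : Fin 2) : g13.A i := (1 : Fin 2)

theorem eq_left13_or_eq_right13 {i : Fin 2} (a : g13.A i) : a = left13 i ∨ a = right13 i :=
  (by decide : ∀ b : Fin 2, b = 0 ∨ b = 1) a

theorem left13_ne_right13 (i : Fin 2) : left13 i ≠ right13 i :=
  (by decide : (0 : Fin 2) ≠ 1)

theorem profile13_ext {s t : Profile g13} (h0 : s 0 = t 0) (h1 : s 1 = t 1) : s = t :=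
  funext (Fin.forall_fin_two.2 ⟨h0, h1⟩)

/-- `(R,L)`. -/
def rl13 : Profile g13 := fun i => if i = 0 then (1 : Fin 2) else (0 : Fin 2)

theorem eq_ll13_or_lr13_or_rl13_or_rr13 (s : Profile g13) :
    s = ll13 ∨ s = lr13 ∨ s = rl13 ∨ s = rr13 := by
  obtain h0 | h0 := eq_left13_or_eq_right13 (s 0) <;>
    obtain h1 | h1 := eq_left13_or_eq_right13 (s 1)
  · exact .inl (profile13_ext h0 h1)
  · exact .inr (.inl (profile13_ext h0 h1))
  · exact .inr (.inr (.inl (profile13_ext h0 h1)))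
  · exact .inr (.inr (.inr (profile13_ext h0 h1)))

theorem lr13_ne_ll13 : lr13 ≠ ll13 := fun he => left13_ne_right13 1 (congrFun he 1).symm

theorem u_ll13 : g13.u 0 ll13 = 4 ∧ g13.u 1 ll13 = 3 := ⟨rfl, rfl⟩

theorem u_lr13 : g13.u 0 lr13 = 1 ∧ g13.u 1 lr13 = 4 := ⟨rfl, rfl⟩

theorem u_rl13 : g13.u 0 rl13 = 2 ∧ g13.u 1 rl13 = 1 := ⟨rfl, rfl⟩

theorem u_rr13 : g13.u 0 rr13 = 3 ∧ g13.u 1 rr13 = 2 := ⟨rfl, rfl⟩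

theorem two_le_u_of_eq_right13 {i : Fin 2} {s : Profile g13} (hs : s i = right13 i) :
    2 ≤ g13.u i s := by
  obtain rfl | rfl | rfl | rfl := eq_ll13_or_lr13_or_rl13_or_rr13 s <;>
    obtain rfl | rfl := Fin.exists_fin_two.1 ⟨i, rfl⟩ <;>
    first
      | exact absurd hs (left13_ne_right13 _)
      | norm_num [u_lr13, u_rl13, u_rr13]

theorem eq_lr13_of_four_le_u {s : Profile g13} (hs : 4 ≤ g13.u 1 s) : s = lr13 := by
  obtain rfl | rfl | rfl | rfl := eq_ll13_or_lr13_or_rl13_or_rr13 s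
  · norm_num [u_ll13] at hs
  · rfl
  · norm_num [u_rl13] at hs
  · norm_num [u_rr13] at hs

theorem eq_rr13_of_two_le_u {s : Profile g13} (hll : s ≠ ll13) (h0 : 2 ≤ g13.u 0 s)
    (h1 : 2 ≤ g13.u 1 s) : s = rr13 := by
  obtain rfl | rfl | rfl | rfl := eq_ll13_or_lr13_or_rl13_or_rr13 s
  · exact absurd rfl hll
  · norm_num [u_lr13] at h0
  · norm_num [u_rl13] at h1
  · rfl

theorem paretoDom_ll13_rr13 : ParetoDom g13 ll13 rr13 := by
  refine ⟨Fin.forall_fin_two.2 ⟨?_, ?_⟩, 0, ?_⟩ <;> norm_num [u_ll13, u_rr13]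

theorem altI13_append_of_eq_zero {h : Hist g13} (hh : altI13 h = 0) (m : Move g13) :
    altI13 (h ++ [m]) = 1 := by
  have hmod : h.length % 2 = 0 := congrArg Fin.val hh
  ext
  simp only [altI13, List.length_append, List.length_singleton, Fin.val_one]
  omega

theorem altI13_append_of_eq_one {h : Hist g13} (hh : altI13 h = 1) (m : Move g13) :
    altI13 (h ++ [m]) = 0 := by
  have hmod : h.length % 2 = 1 := congrArg Fin.val hh
  ext
  simp only [altI13, List.length_append, List.length_singleton, Fin.val_zero]
  omega

theorem count_zero_altI13 {a0 : Profile g13} {k : ℕ} {h : Hist g13}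
    (hn : IsNode g13 a0 k altI13 h) :
    (h.map Sigma.fst).count 0 = (h.map Sigma.fst).count 1 + (altI13 h : ℕ) := by
  induction h using List.reverseRecOn with
  | nil => rfl
  | append_singleton h m ih =>
    obtain ⟨hn, hm, -⟩ := isNode_append_singleton.1 hn
    have hcount (i : Fin 2) : ((h ++ [m]).map Sigma.fst).count i =
        (h.map Sigma.fst).count i + if altI13 h = i then 1 else 0 := by
      simp [hm, List.count_singleton]
    rw [hcount, hcount, ih hn]
    rcases Fin.exists_fin_two.1 ⟨altI13 h, rfl⟩ with h0 | h1
    · simp [altI13_append_of_eq_zero h0, h0]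
    · simp [altI13_append_of_eq_one h1, h1]

theorem admissible_altI13 (a0 : Profile g13) (k : ℕ) : Admissible g13 a0 k altI13 := by
  intro h hn
  have hcount := count_zero_altI13 hn
  refine Fin.forall_fin_two.2 ⟨Fin.forall_fin_two.2 ?_, Fin.forall_fin_two.2 ?_⟩ <;> omega

/-- Row has used up the one permitted departure from `(L,R)`. -/
def RowLocked (h : Hist g13) : Prop := 0 < timesPlayed g13 lr13 h lr13 ⟨0, some (right13 0)⟩

/-- Column has not yet played `R` while Row's component of the state was `L`. -/
def ColumnFresh (h : Hist g13) : Prop :=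
  ∀ s : Profile g13, s 0 = left13 0 → timesPlayed g13 lr13 h s ⟨1, some (right13 1)⟩ = 0

theorem RowLocked.append {h : Hist g13} (hlock : RowLocked h) (m : Move g13) :
    RowLocked (h ++ [m]) := by
  rw [RowLocked, timesPlayed_append_singleton]
  exact Nat.add_pos_left hlock _

theorem RowLocked.eq_pass_or_stay {h : Hist g13} (hlock : RowLocked h)
    (hs : state g13 lr13 h = lr13) {c : Option (g13.A 0)} (hc : availAct g13 lr13 1 h c) :
    c = none ∨ c = some (state g13 lr13 h 0) := by
  obtain _ | a := c
  · exact .inl rfl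
  obtain rfl | rfl := eq_left13_or_eq_right13 a
  · rw [hs]
    exact .inr rfl
  · rw [availAct_some, hs] at hc
    exact absurd hlock (Nat.lt_one_iff.1 hc).not_gt

theorem ColumnFresh.availAct {h : Hist g13} (hfresh : ColumnFresh h)
    (hs : state g13 lr13 h 0 = left13 0) : availAct g13 lr13 1 h (some (right13 1)) :=
  availAct_some.2 (hfresh _ hs ▸ Nat.zero_lt_one)

theorem ColumnFresh.append {h : Hist g13} (hfresh : ColumnFresh h) {m : Move g13}
    (hm : m = ⟨1, some (right13 1)⟩ → state g13 lr13 h 0 ≠ left13 0) : ColumnFresh (h ++ [m]) := by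
  intro s hs
  rw [timesPlayed_append_singleton, hfresh s hs, if_neg]
  rintro ⟨hm', rfl⟩
  exact hm hm' hs

theorem ColumnFresh.append_of_right {h : Hist g13} (hfresh : ColumnFresh h)
    (hs : state g13 lr13 h 0 = right13 0) (m : Move g13) : ColumnFresh (h ++ [m]) :=
  hfresh.append fun _ he => left13_ne_right13 0 (he.symm.trans hs)

theorem columnFresh_singleton (c : Option (g13.A 0)) : ColumnFresh [⟨0, c⟩] :=
  ColumnFresh.append (h := []) (fun _ _ => rfl) fun hm => nomatch hm

theorem rowLocked_singleton : RowLocked [⟨0, some (right13 0)⟩] := by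
  rw [RowLocked, ← List.nil_append [_], timesPlayed_append_singleton, if_pos ⟨rfl, rfl⟩]
  exact Nat.succ_pos _

variable {σ : StratProfile g13} {h : Hist g13}

theorem SPE.outcomeFrom_eq_lr13_of_append (hσ : SPE g13 lr13 1 altI13 σ)
    (hn : IsNode g13 lr13 1 altI13 h) (hT : ¬ Terminal g13 lr13 h) (hcol : altI13 h = 1)
    {c : Option (g13.A 1)} (hc : availAct g13 lr13 1 h c)
    (hout : outcomeFrom g13 lr13 1 altI13 σ (h ++ [⟨1, c⟩]) = lr13) :
    outcomeFrom g13 lr13 1 altI13 σ h = lr13 := by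
  refine eq_lr13_of_four_le_u ?_
  have hle := hσ.utility_outcomeFrom_append_le (admissible_altI13 _ _) hn hT hcol hc
  rwa [hout, u_lr13.2] at hle

/-- Column passes until Row gives in. -/
theorem SPE.outcomeFrom_eq_lr13_of_state_eq_of_refpt_eq (hσ : SPE g13 lr13 1 altI13 σ)
    (hn : IsNode g13 lr13 1 altI13 h) (hs : state g13 lr13 h = lr13)
    (hr : refpt g13 lr13 h = lr13) (hlock : RowLocked h) :
    outcomeFrom g13 lr13 1 altI13 σ h = lr13 := by
  have hI := admissible_altI13 lr13 1
  induction h, hn using hI.backward_induction with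
  | step h hn ih =>
  by_cases hT : Terminal g13 lr13 h
  · rwa [outcomeFrom_of_terminal hT]
  have ihpass (i : Fin 2) (hi : altI13 h = i) :
      outcomeFrom g13 lr13 1 altI13 σ (h ++ [⟨i, none⟩]) = lr13 :=
    ih _ (hn.append_choice hT hi (availAct_pass h i)) (by rwa [state_append_pass])
      (by rwa [refpt_append_pass]) (hlock.append _)
  rcases Fin.exists_fin_two.1 ⟨altI13 h, rfl⟩ with hrow | hcol
  · obtain ⟨c, hc, hout⟩ := hσ.1.exists_outcomeFrom_append hI hn hT hrow
    rw [← hout]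
    obtain rfl | rfl := hlock.eq_pass_or_stay hs hc
    · exact ihpass 0 hrow
    · exact ih _ (hn.append_choice hT hrow hc) (by rwa [state_append_stay])
        (by rwa [refpt_append_stay]) (hlock.append _)
  · exact hσ.outcomeFrom_eq_lr13_of_append hn hT hcol (availAct_pass h 1)
      (ihpass 1 hcol)

theorem SPE.outcomeFrom_eq_lr13_of_state_eq_lr13 (hσ : SPE g13 lr13 1 altI13 σ)
    (hn : IsNode g13 lr13 1 altI13 h) (hT : ¬ Terminal g13 lr13 h) (hcol : altI13 h = 1)
    (hs : state g13 lr13 h = lr13) (hlock : RowLocked h)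
    (hc : availAct g13 lr13 1 h (some (right13 1))) :
    outcomeFrom g13 lr13 1 altI13 σ h = lr13 := by
  have hstay : right13 1 = state g13 lr13 h 1 := by rw [hs]; rfl
  rw [hstay] at hc
  exact hσ.outcomeFrom_eq_lr13_of_append hn hT hcol hc
    (hσ.outcomeFrom_eq_lr13_of_state_eq_of_refpt_eq (hn.append_choice hT hcol hc)
      (by rwa [state_append_stay]) (by rwa [refpt_append_stay]) (hlock.append _))

/-- Column moves to `(L,R)`, where Row can only pass or stay, and stays there. -/
theorem SPE.outcomeFrom_eq_lr13_of_state_eq_ll13 (hσ : SPE g13 lr13 1 altI13 σ)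
    (hn : IsNode g13 lr13 1 altI13 h) (hT : ¬ Terminal g13 lr13 h) (hcol : altI13 h = 1)
    (hs : state g13 lr13 h = ll13) (hlock : RowLocked h) (hfresh : ColumnFresh h) :
    outcomeFrom g13 lr13 1 altI13 σ h = lr13 := by
  have hI := admissible_altI13 lr13 1
  have hmove : right13 1 ≠ state g13 lr13 h 1 := by rw [hs]; exact (left13_ne_right13 1).symm
  have hc : availAct g13 lr13 1 h (some (right13 1)) := hfresh.availAct (by rw [hs]; rfl)
  set h₁ : Hist g13 := h ++ [⟨1, some (right13 1)⟩]
  have hn₁ : IsNode g13 lr13 1 altI13 h₁ := hn.append_choice hT hcol hc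
  have hT₁ : ¬ Terminal g13 lr13 h₁ := not_terminal_append_move hmove
  have hrow : altI13 h₁ = 0 := altI13_append_of_eq_one hcol _
  have hs₁ : state g13 lr13 h₁ = lr13 := by
    rw [state_append_some, hs]
    exact profile13_ext rfl rfl
  have hlock₁ : RowLocked h₁ := hlock.append _
  refine hσ.outcomeFrom_eq_lr13_of_append hn hT hcol hc ?_
  obtain ⟨c, hc₁, hout⟩ := hσ.1.exists_outcomeFrom_append hI hn₁ hT₁ hrow
  have hn₂ : IsNode g13 lr13 1 altI13 (h₁ ++ [⟨0, c⟩]) := hn₁.append_choice hT₁ hrow hc₁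
  rw [← hout]
  obtain rfl | rfl := hlock₁.eq_pass_or_stay hs₁ hc₁
  · refine hσ.outcomeFrom_eq_lr13_of_state_eq_lr13 hn₂
      (not_terminal_append_some_pass le_rfl h 1 0 _) (altI13_append_of_eq_zero hrow _)
      (by rwa [state_append_pass]) (hlock₁.append _) ?_
    have hplayed : timesPlayed g13 lr13 h₁ lr13 ⟨1, some (right13 1)⟩ = 0 := by
      rw [timesPlayed_append_singleton, hfresh lr13 rfl, hs,
        if_neg fun hm => lr13_ne_ll13 hm.2.symm]
    rw [availAct_some, state_append_pass, timesPlayed_append_singleton, hs₁, hplayed,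
      if_neg fun hm => nomatch hm.1]
    exact Nat.zero_lt_one
  · exact hσ.outcomeFrom_eq_lr13_of_state_eq_of_refpt_eq hn₂ (by rwa [state_append_stay])
      (by rwa [refpt_append_stay]) (hlock₁.append _)

theorem SPE.outcomeFrom_eq_lr13_of_state_zero_eq_left (hσ : SPE g13 lr13 1 altI13 σ)
    (hn : IsNode g13 lr13 1 altI13 h) (hT : ¬ Terminal g13 lr13 h) (hcol : altI13 h = 1)
    (hs : state g13 lr13 h 0 = left13 0) (hlock : RowLocked h) (hfresh : ColumnFresh h) :
    outcomeFrom g13 lr13 1 altI13 σ h = lr13 := by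
  obtain hL | hR := eq_left13_or_eq_right13 (state g13 lr13 h 1)
  · exact hσ.outcomeFrom_eq_lr13_of_state_eq_ll13 hn hT hcol (profile13_ext hs hL) hlock hfresh
  · exact hσ.outcomeFrom_eq_lr13_of_state_eq_lr13 hn hT hcol (profile13_ext hs hR) hlock
      (hfresh.availAct hs)

theorem ne_ll13_of_eq_right13 {s : Profile g13} (hs : s 0 = right13 0) : s ≠ ll13 :=
  fun he => left13_ne_right13 0 ((congrFun he 0).symm.trans hs)

/-- As soon as Row returns to `L`, Column can secure `(L,R)`. -/
theorem SPE.outcomeFrom_ne_ll13 (hσ : SPE g13 lr13 1 altI13 σ)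
    (hn : IsNode g13 lr13 1 altI13 h) (hs : state g13 lr13 h 0 = right13 0)
    (hr : refpt g13 lr13 h ≠ ll13) (hlock : RowLocked h) (hfresh : ColumnFresh h) :
    outcomeFrom g13 lr13 1 altI13 σ h ≠ ll13 := by
  have hI := admissible_altI13 lr13 1
  induction h, hn using hI.backward_induction with
  | step h hn ih =>
  by_cases hT : Terminal g13 lr13 h
  · rwa [outcomeFrom_of_terminal hT]
  have hstep {i : Fin 2} (hi : altI13 h = i) {c : Option (g13.A i)}
      (hc : availAct g13 lr13 1 h c) (hs₁ : state g13 lr13 (h ++ [⟨i, c⟩]) 0 = right13 0) :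
      outcomeFrom g13 lr13 1 altI13 σ (h ++ [⟨i, c⟩]) ≠ ll13 := by
    refine ih _ (hn.append_choice hT hi hc) hs₁ ?_ (hlock.append _) (hfresh.append_of_right hs _)
    obtain hr₁ | hr₁ := refpt_append_eq_or h ⟨i, c⟩ <;> rw [hr₁]
    · exact hr
    · exact ne_ll13_of_eq_right13 hs
  rcases Fin.exists_fin_two.1 ⟨altI13 h, rfl⟩ with hrow | hcol
  · obtain ⟨c, hc, hout⟩ := hσ.1.exists_outcomeFrom_append hI hn hT hrow
    rw [← hout]
    obtain _ | a := c
    · exact hstep hrow hc (by rwa [state_append_pass])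
    have hs₁ : state g13 lr13 (h ++ [⟨0, some a⟩]) 0 = a := by
      rw [state_append_some, Function.update_self]
    obtain rfl | rfl := eq_left13_or_eq_right13 a
    · have hmove : left13 0 ≠ state g13 lr13 h 0 := hs ▸ left13_ne_right13 0
      rw [hσ.outcomeFrom_eq_lr13_of_state_zero_eq_left (hn.append_choice hT hrow hc)
        (not_terminal_append_move hmove) (altI13_append_of_eq_zero hrow _) hs₁ (hlock.append _)
        (hfresh.append_of_right hs _)]
      exact lr13_ne_ll13
    · exact hstep hrow hc hs₁
  · obtain ⟨c, hc, hout⟩ := hσ.1.exists_outcomeFrom_append hI hn hT hcol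
    rw [← hout]
    exact hstep hcol hc ((state_append_of_ne h Fin.zero_ne_one).trans hs)

/-- Row has played `R` at `(L,R)` only, so staying at `R` is still available. -/
theorem SPE.two_le_u_zero_outcomeFrom_singleton_right (hσ : SPE g13 lr13 1 altI13 σ)
    (hn : IsNode g13 lr13 1 altI13 [⟨0, some (right13 0)⟩]) :
    2 ≤ g13.u 0 (outcomeFrom g13 lr13 1 altI13 σ [⟨0, some (right13 0)⟩]) := by
  have hI := admissible_altI13 lr13 1
  have hT : ¬ Terminal g13 lr13 [⟨0, some (right13 0)⟩] :=
    not_terminal_of_length_le_one le_rfl le_rfl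
  obtain ⟨c, hc, hout⟩ := hσ.1.exists_outcomeFrom_append hI hn hT (i := 1) rfl
  have hr : refpt g13 lr13 [⟨0, some (right13 0)⟩] ≠ state g13 lr13 [⟨0, some (right13 0)⟩] :=
    fun he => left13_ne_right13 0 (congrFun he 0)
  have hn₂ : IsNode g13 lr13 1 altI13 ([⟨0, some (right13 0)⟩] ++ [⟨1, c⟩]) :=
    hn.append_choice hT rfl hc
  have hT₂ : ¬ Terminal g13 lr13 ([⟨0, some (right13 0)⟩] ++ [⟨1, c⟩]) := by
    obtain _ | a := c
    · exact not_terminal_append_some_pass le_rfl [] 0 1 _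
    · exact not_terminal_append_some hr 1 a
  have hs₂ : state g13 lr13 ([⟨0, some (right13 0)⟩] ++ [⟨1, c⟩]) 0 = right13 0 :=
    state_append_of_ne [⟨0, some (right13 0)⟩] Fin.zero_ne_one
  have hmoved : state g13 lr13 [] ≠ state g13 lr13 ([⟨0, some (right13 0)⟩] ++ [⟨1, c⟩]) := by
    intro he
    rw [← he] at hs₂
    exact left13_ne_right13 0 hs₂
  rw [← hout]
  refine hσ.le_utility_of_availAct_stay hI hn₂ hT₂ (altI13_append_of_eq_one rfl _) ?_ fun s hs =>
    two_le_u_of_eq_right13 (hs.trans hs₂)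
  rw [availAct_some, hs₂, timesPlayed_append_singleton, if_neg (fun hm => nomatch hm.1),
    ← List.nil_append [_], timesPlayed_append_singleton, if_neg fun hm => hmoved hm.2]
  exact Nat.zero_lt_one

theorem SPE.outcomeFrom_singleton_right (hσ : SPE g13 lr13 1 altI13 σ)
    (hn : IsNode g13 lr13 1 altI13 [⟨0, some (right13 0)⟩]) :
    outcomeFrom g13 lr13 1 altI13 σ [⟨0, some (right13 0)⟩] = rr13 :=
  eq_rr13_of_two_le_u
    (hσ.outcomeFrom_ne_ll13 hn rfl lr13_ne_ll13 rowLocked_singleton (columnFresh_singleton _))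
    (hσ.two_le_u_zero_outcomeFrom_singleton_right hn)
    (hσ.le_utility_of_forall_eq_state (admissible_altI13 _ _) hn
      (fun _ hs => two_le_u_of_eq_right13 hs) (two_le_u_of_eq_right13 rfl))

theorem SPE.outcomeFrom_singleton_pass (hσ : SPE g13 lr13 1 altI13 σ)
    (hn : IsNode g13 lr13 1 altI13 [⟨0, none⟩]) :
    outcomeFrom g13 lr13 1 altI13 σ [⟨0, none⟩] = lr13 := by
  have hT : Terminal g13 lr13 [⟨0, none⟩, ⟨1, none⟩] :=
    .inr ⟨le_rfl, by simp, by simp [Fin.forall_fin_two]⟩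
  exact hσ.outcomeFrom_eq_lr13_of_append hn (not_terminal_of_length_le_one le_rfl le_rfl)
    rfl (availAct_pass _ 1) (outcomeFrom_of_terminal hT)

theorem SPE.outcomeFrom_singleton_left (hσ : SPE g13 lr13 1 altI13 σ)
    (hn : IsNode g13 lr13 1 altI13 [⟨0, some (left13 0)⟩]) :
    outcomeFrom g13 lr13 1 altI13 σ [⟨0, some (left13 0)⟩] = lr13 := by
  have hT : Terminal g13 lr13 [⟨0, some (left13 0)⟩, ⟨1, some (right13 1)⟩] :=
    .inl ⟨[⟨0, some (left13 0)⟩], _, 0, rfl, rfl, rfl, rfl, Fin.zero_ne_one⟩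
  exact hσ.outcomeFrom_eq_lr13_of_append hn (not_terminal_of_length_le_one le_rfl le_rfl)
    rfl ((columnFresh_singleton _).availAct rfl) (outcomeFrom_of_terminal hT)

theorem SPE.outcome_eq_rr13 (hσ : SPE g13 lr13 1 altI13 σ) :
    outcome g13 lr13 1 altI13 σ = rr13 := by
  have hI := admissible_altI13 lr13 1
  have hT : ¬ Terminal g13 lr13 [] := not_terminal_of_length_le_one le_rfl zero_le_one
  have hnode {c : Option (g13.A 0)} (hc : availAct g13 lr13 1 [] c) :
      IsNode g13 lr13 1 altI13 [⟨0, c⟩] := isNode_nil.append_choice hT rfl hc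
  have hright : availAct g13 lr13 1 [] (some (right13 0)) := availAct_some.2 Nat.zero_lt_one
  have hle := hσ.utility_outcomeFrom_append_le hI isNode_nil hT (i := 0) rfl hright
  have hne : outcome g13 lr13 1 altI13 σ ≠ lr13 := by
    intro he
    rw [outcome] at he
    rw [he, List.nil_append, hσ.outcomeFrom_singleton_right (hnode hright), u_rr13.1,
      u_lr13.1] at hle
    norm_num at hle
  obtain ⟨c, hc, hout⟩ := hσ.1.exists_outcomeFrom_append hI isNode_nil hT (i := 0) rfl
  rw [outcome, ← hout] at hne ⊢
  obtain _ | a := c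
  · exact absurd (hσ.outcomeFrom_singleton_pass (hnode hc)) hne
  obtain rfl | rfl := eq_left13_or_eq_right13 a
  · exact absurd (hσ.outcomeFrom_singleton_left (hnode hc)) hne
  · exact hσ.outcomeFrom_singleton_right (hnode hc)

end Example

/-- In the game above with initial reference point `(L,R)`,
`k = 1`, and the strictly alternating player function with Row first, the
(unconstrained) subgame perfect equilibrium outcome of `Γ` is `(R,R)`, which is
Pareto dominated by `(L,L)`: without the NHP the equilibrium outcome need not
be Pareto optimal. -/
theorem spe_outcome_not_pareto_optimal :
    (∃ σ : StratProfile g13, SPE g13 lr13 1 altI13 σ) ∧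
    (∀ σ : StratProfile g13, SPE g13 lr13 1 altI13 σ →
      outcome g13 lr13 1 altI13 σ = rr13) ∧
    ParetoDom g13 ll13 rr13 := by
  exact ⟨(admissible_altI13 _ _).exists_spe, fun _ hσ => hσ.outcome_eq_rr13, paretoDom_ll13_rr13⟩

end NoHarm
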